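/- Assume σ is essential and A is generated as a ring by φ(R) ∪ {X, Y}. Let M be a simple weight A-module. Then there exist a subset I ⊆ ℤ which is either all of ℤ, or {i ∈ ℤ : i ≥ 0}, or {i ∈ ℤ : i ≤ 0}, or {0, 1, …, n} for some n ∈ ℤ_{≥0}, and a family (m_i)_{i∈I} of maximal ideals of R such that: σ(m_i) ⊆ m_{i+1} whenever i and i+1 both lie in I; if I has a least element i₀ then σ(t) ∈ m_{i₀}; if I has a greatest element i₁ then t ∈ m_{i₁}; and supp(M) ⊆ {m_i : i ∈ I}. -/

import Mathlib

variable {R A M : Type*}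

/-- Weight space of an `A`-module `M` (viewed as `R`-module via `φ`) at an ideal `m`:
`M_m = {v ∈ M : r • v = 0 for all r ∈ m}`. -/
def weightSpace [CommRing R] [Ring A] [AddCommGroup M] [Module A M]
    (φ : R →+* A) (m : Ideal R) : AddSubgroup M where
  carrier := {v | ∀ r ∈ m, φ r • v = 0}
  zero_mem' := fun r _ => smul_zero (φ r)
  add_mem' := by
    intro a b ha hb r hr
    rw [smul_add, ha r hr, hb r hr, add_zero]
  neg_mem' := by
    intro a ha r hr
    rw [smul_neg, ha r hr, neg_zero]

/-- `M` is a weight module: it is the internal direct sum of its weight spaces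
over all maximal ideals of `R`. -/
def IsWeightModule [CommRing R] [Ring A] [AddCommGroup M] [Module A M]
    (φ : R →+* A) : Prop :=
  (⨆ m : {m : Ideal R // m.IsMaximal}, weightSpace (M := M) φ m.1) = ⊤ ∧
  iSupIndep (fun m : {m : Ideal R // m.IsMaximal} => weightSpace (M := M) φ m.1)

/-- `σ` is an essential endomorphism: for every maximal ideal `m` the map
`r ↦ σ(r) + m` from `R` to `R/m` is surjective. -/
def IsEssential [CommRing R] (σ : R →+* R) : Prop :=
  ∀ m : Ideal R, m.IsMaximal →
    Function.Surjective (fun r : R => Ideal.Quotient.mk m (σ r))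

/-!
For essential `σ` the preimage `σ⁻¹(m)` of a maximal ideal `m` is maximal, and then `f m = σ⁻¹(m)`
is a self-map of the maximal spectrum of `R`. The element `Y` sends `M_m` into `M_{f m}`, and `X`
sends `M_m` into the sum of the `M_n` with `f n = m`.

Call `m` and `n` comparable if one of them is an iterate of the other under `f`. For fixed `m`,
the weight spaces `M_n` with `n` above `m` together with all `Y ^ k M_m` span a submodule: `X`
undoes a factor `Y` up to the scalar `φ (σ t) = X * Y`. If `M` is simple and `M_m ≠ 0` this
submodule is `M`, so any two weights in the support are comparable.

Let `T` be the union of the forward orbits of the support. If `f` is onto on `T`, then `T` is a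
single two-sided orbit, indexed by `ℤ`. Otherwise some `m` in `T` has no preimage in `T`; it then
lies in the support and all other weights are iterates of it. Moreover `X` kills `M_m`, hence so
does `Y * X = φ t`, that is `t ∈ m`. A chain obtained in this way is never bounded below.
-/

section Iterate

open Function

variable {α : Type*} {f : α → α} {a b : α}

/-- One of the two points is an iterate of the other: they lie on a common forward orbit, in
either order. -/
def IterateComparable (f : α → α) (a b : α) : Prop :=
  (∃ k : ℕ, f^[k] a = b) ∨ ∃ k : ℕ, f^[k] b = a

theorem IterateComparable.symm (h : IterateComparable f a b) : IterateComparable f b a :=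
  Or.symm h

theorem IterateComparable.iterate_left (h : IterateComparable f a b) (n : ℕ) :
    IterateComparable f (f^[n] a) b := by
  rcases h with ⟨k, rfl⟩ | ⟨k, rfl⟩
  · rcases le_total n k with hnk | hkn
    · exact .inl ⟨k - n, by rw [← iterate_add_apply, Nat.sub_add_cancel hnk]⟩
    · exact .inr ⟨n - k, by rw [← iterate_add_apply, Nat.sub_add_cancel hkn]⟩
  · exact .inr ⟨n + k, iterate_add_apply f n k b⟩

theorem IterateComparable.iterate (h : IterateComparable f a b) (i j : ℕ) :
    IterateComparable f (f^[i] a) (f^[j] b) :=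
  ((h.iterate_left i).symm.iterate_left j).symm

theorem eq_zero_of_iterate_iterate_eq {n k : ℕ} (h : f^[n] (f^[k] a) = f^[n] a)
    (hper : f^[n] a ∉ periodicPts f) : k = 0 := by
  by_contra hk
  exact hper (mk_mem_periodicPts (Nat.pos_of_ne_zero hk)
    ((Commute.iterate_iterate_self f k n a).trans h))

theorem IterateComparable.eq_of_iterate_eq (h : IterateComparable f a b) {n : ℕ}
    (hab : f^[n] a = f^[n] b) (hper : f^[n] a ∉ periodicPts f) : a = b := by
  rcases h with ⟨k, rfl⟩ | ⟨k, rfl⟩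
  · rw [eq_zero_of_iterate_iterate_eq hab.symm hper, iterate_zero_apply]
  · rw [eq_zero_of_iterate_iterate_eq hab (hab ▸ hper), iterate_zero_apply]

theorem exists_iterate_fiber_subsingleton [Nonempty α] (hcomp : ∀ a b, IterateComparable f a b) :
    ∃ x, ∀ (n : ℕ) (a b : α), f^[n] a = x → f^[n] b = x → a = b := by
  by_cases hper : ∃ x, x ∉ periodicPts f
  · obtain ⟨x, hx⟩ := hper
    exact ⟨x, fun n a b ha hb => (hcomp a b).eq_of_iterate_eq (ha.trans hb.symm) (ha ▸ hx)⟩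
  · push Not at hper
    have hinj : Injective f := fun a b hab =>
      (bijOn_periodicPts f).injOn (hper a) (hper b) hab
    exact ⟨Classical.arbitrary α, fun n a b ha hb => hinj.iterate n (ha.trans hb.symm)⟩

theorem exists_int_orbit (hf : Surjective f) (x : α) :
    ∃ c : ℤ → α, c 0 = x ∧ ∀ i, f (c (i + 1)) = c i := by
  refine ⟨fun i => Int.rec (fun n => (surjInv hf)^[n] x) (fun n => f^[n + 1] x) i, rfl, ?_⟩
  rintro (n | _ | n)
  · change f ((surjInv hf)^[n + 1] x) = (surjInv hf)^[n] x
    rw [iterate_succ_apply', surjInv_eq hf]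
  · rfl
  · exact (iterate_succ_apply' f (n + 1) x).symm

theorem iterate_int_orbit {c : ℤ → α} (hc : ∀ i, f (c (i + 1)) = c i) (n : ℕ) (i : ℤ) :
    f^[n] (c (i + n)) = c i := by
  induction n with
  | zero => simp
  | succ n ih => rw [iterate_succ_apply, Nat.cast_succ, ← add_assoc, hc, ih]

theorem exists_surjective_int_orbit [Nonempty α] (hf : Surjective f)
    (hcomp : ∀ a b, IterateComparable f a b) :
    ∃ c : ℤ → α, Surjective c ∧ ∀ i, f (c (i + 1)) = c i := by
  obtain ⟨x, hx⟩ := exists_iterate_fiber_subsingleton hcomp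
  obtain ⟨c, rfl, hc⟩ := exists_int_orbit hf x
  refine ⟨c, fun y => ?_, hc⟩
  rcases hcomp (c 0) y with ⟨n, rfl⟩ | ⟨n, hn⟩
  · exact ⟨-n, by simpa using (iterate_int_orbit hc n (-n)).symm⟩
  · exact ⟨n, hx n _ _ (by simpa using iterate_int_orbit hc n 0) hn⟩

theorem exists_int_orbit_or_exists_root {S : Set α} (hS : S.Nonempty)
    (hcomp : ∀ a ∈ S, ∀ b ∈ S, IterateComparable f a b) :
    (∃ c : ℤ → α, (∀ i, f (c (i + 1)) = c i) ∧ S ⊆ Set.range c) ∨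
      ∃ m ∈ S, (∀ n ∈ S, f n ≠ m) ∧ ∀ s ∈ S, ∃ k : ℕ, f^[k] m = s := by
  let T : Set α := {x | ∃ s ∈ S, ∃ k : ℕ, f^[k] s = x}
  have hST : S ⊆ T := fun s hs => ⟨s, hs, 0, rfl⟩
  have hT : Set.MapsTo f T T := by
    rintro _ ⟨s, hs, k, rfl⟩
    exact ⟨s, hs, k + 1, iterate_succ_apply' f k s⟩
  by_cases hsurj : Surjective (hT.restrict f T T)
  · left
    have hTcomp (x y : T) : IterateComparable (hT.restrict f T T) x y := by
      obtain ⟨⟨_, s, hs, i, rfl⟩, ⟨_, s', hs', j, rfl⟩⟩ := x, y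
      simpa only [IterateComparable, Subtype.ext_iff, hT.coe_iterate_restrict] using
        (hcomp s hs s' hs').iterate i j
    have : Nonempty T := (hS.mono hST).to_subtype
    obtain ⟨c, hcsurj, hc⟩ := exists_surjective_int_orbit hsurj hTcomp
    refine ⟨fun i => c i, fun i => congrArg Subtype.val (hc i), fun s hs => ?_⟩
    obtain ⟨i, hi⟩ := hcsurj ⟨s, hST hs⟩
    exact ⟨i, congrArg Subtype.val hi⟩
  · right
    obtain ⟨m, hmT, hm⟩ : ∃ m ∈ T, ∀ n ∈ T, f n ≠ m := by
      simpa [Surjective, Subtype.ext_iff] using hsurj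
    have eq_of_iterate {s : α} (hs : s ∈ S) {k : ℕ} (hk : f^[k] s = m) : s = m := by
      cases k with
      | zero => exact hk
      | succ k => exact absurd ((iterate_succ_apply' f k s).symm.trans hk) (hm _ ⟨s, hs, k, rfl⟩)
    obtain ⟨s, hs, k, hk⟩ := hmT
    obtain rfl := eq_of_iterate hs hk
    refine ⟨s, hs, fun n hn => hm n (hST hn), fun s' hs' => ?_⟩
    rcases hcomp s hs s' hs' with h | ⟨k, hk⟩
    · exact h
    · exact ⟨0, (eq_of_iterate hs' hk).symm⟩

end Iterate

section AddSubgroup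

variable {ι : Type*} [AddCommGroup M] {p : ι → AddSubgroup M}

theorem exists_finsupp_of_mem_iSup {u : M} (hu : u ∈ ⨆ i, p i) :
    ∃ v : ι →₀ M, (∀ i, v i ∈ p i) ∧ (v.sum fun _ x => x) = u := by
  have hu' : u ∈ ⨆ i, AddSubgroup.toIntSubmodule (p i) := by
    rwa [← OrderIso.map_iSup]
  exact (Submodule.mem_iSup_iff_exists_finsupp _ u).1 hu'

theorem eq_zero_of_sum_eq_zero_of_iSupIndep (hp : iSupIndep p) {s : Finset ι} {v : ι → M}
    (hv : ∀ i ∈ s, v i ∈ p i) (hsum : ∑ i ∈ s, v i = 0) : ∀ i ∈ s, v i = 0 :=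
  (iSupIndep_iff_finsetSum_eq_zero_imp_eq_zero fun i => AddSubgroup.toIntSubmodule (p i)).1
    (hp.map_orderIso AddSubgroup.toIntSubmodule) s v hv hsum

end AddSubgroup

section Subring

variable [Ring A] [AddCommGroup M] [Module A M]

theorem smul_mem_of_closure_eq_top {s : Set A} (hs : Subring.closure s = ⊤) {N : AddSubgroup M}
    (hN : ∀ a ∈ s, ∀ v ∈ N, a • v ∈ N) (a : A) : ∀ v ∈ N, a • v ∈ N := by
  have ha : a ∈ Subring.closure s := hs ▸ Subring.mem_top a
  induction ha using Subring.closure_induction with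
  | mem a ha => exact hN a ha
  | zero => exact fun v _ => (zero_smul A v).symm ▸ N.zero_mem
  | one => exact fun v hv => (one_smul A v).symm ▸ hv
  | add a b _ _ ha hb => exact fun v hv => add_smul a b v ▸ N.add_mem (ha v hv) (hb v hv)
  | neg a _ ha => exact fun v hv => neg_smul a v ▸ N.neg_mem (ha v hv)
  | mul a b _ _ ha hb => exact fun v hv => mul_smul a b v ▸ ha _ (hb v hv)

end Subring

section MaximalComap

variable [CommRing R] {σ : R →+* R}

theorem IsEssential.isMaximal_comap (hess : IsEssential σ) {m : Ideal R} (hm : m.IsMaximal) :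
    (m.comap σ).IsMaximal := by
  let _ := Ideal.Quotient.field m
  rw [← Ideal.mk_ker (I := m), RingHom.comap_ker]
  exact RingHom.ker_isMaximal_of_surjective ((Ideal.Quotient.mk m).comp σ) (hess m hm)

/-- The self-map `m ↦ σ⁻¹(m)` of the maximal spectrum, for `σ` pulling maximal ideals back to
maximal ideals. -/
def maximalComap (hσ : ∀ m : Ideal R, m.IsMaximal → (m.comap σ).IsMaximal)
    (m : MaximalSpectrum R) : MaximalSpectrum R :=
  ⟨m.asIdeal.comap σ, hσ m.asIdeal m.isMaximal⟩

end MaximalComap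

section Weight

variable [CommRing R] [Ring A] [AddCommGroup M] [Module A M] {φ : R →+* A}

variable (M φ) in
/-- The sum of the weight spaces `M_m` over a set of maximal ideals `m`. -/
def weightSum (S : Set (MaximalSpectrum R)) : AddSubgroup M :=
  ⨆ m ∈ S, weightSpace φ m.asIdeal

variable (M φ) in
/-- The support `supp(M)`, as a set of points of the maximal spectrum. -/
def weightSupport : Set (MaximalSpectrum R) :=
  {m | weightSpace (M := M) φ m.asIdeal ≠ ⊥}

theorem weightSpace_le_weightSum {S : Set (MaximalSpectrum R)} {m : MaximalSpectrum R}
    (hm : m ∈ S) : weightSpace φ m.asIdeal ≤ weightSum M φ S :=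
  le_biSup (fun n : MaximalSpectrum R => weightSpace (M := M) φ n.asIdeal) hm

theorem weightSum_le {S : Set (MaximalSpectrum R)} {N : AddSubgroup M}
    (h : ∀ m ∈ S, weightSpace φ m.asIdeal ≤ N) : weightSum M φ S ≤ N :=
  iSup₂_le h

theorem smul_mem_weightSpace {m : Ideal R} (r : R) {v : M} (hv : v ∈ weightSpace φ m) :
    φ r • v ∈ weightSpace φ m := by
  intro s hs
  rw [← mul_smul, ← map_mul, mul_comm, map_mul, mul_smul, hv s hs, smul_zero]

theorem mem_of_smul_eq_zero_of_mem_weightSpace {m : Ideal R} (hm : m.IsMaximal) {v : M}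
    (hv : v ∈ weightSpace φ m) (hv0 : v ≠ 0) {r : R} (hr : φ r • v = 0) : r ∈ m := by
  by_contra hrm
  obtain ⟨a, b, hb, hab⟩ := hm.exists_inv hrm
  apply hv0
  calc v = φ (a * r + b) • v := by rw [hab, map_one, one_smul]
    _ = 0 := by rw [map_add, map_mul, add_smul, mul_smul, hr, hv b hb, smul_zero, add_zero]

theorem IsWeightModule.iSup_eq_top (hw : IsWeightModule (M := M) φ) :
    ⨆ m : MaximalSpectrum R, weightSpace (M := M) φ m.asIdeal = ⊤ :=
  ((MaximalSpectrum.equivSubtype R).iSup_comp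
    (g := fun m : {m : Ideal R // m.IsMaximal} => weightSpace (M := M) φ m.1)).trans hw.1

theorem IsWeightModule.iSupIndep (hw : IsWeightModule (M := M) φ) :
    iSupIndep fun m : MaximalSpectrum R => weightSpace (M := M) φ m.asIdeal :=
  hw.2.comp (MaximalSpectrum.equivSubtype R).injective

theorem IsWeightModule.weightSupport_subset_of_weightSum_eq_top
    (hw : IsWeightModule (M := M) φ) {S : Set (MaximalSpectrum R)} (hS : weightSum M φ S = ⊤) :
    weightSupport M φ ⊆ S := by
  intro m hm
  by_contra hmS
  have hdisj : Disjoint (weightSpace φ m.asIdeal) (weightSum M φ S) :=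
    hw.iSupIndep.disjoint_biSup hmS
  exact hm (disjoint_top.1 (hS ▸ hdisj))

theorem IsWeightModule.weightSupport_nonempty [Nontrivial M] (hw : IsWeightModule (M := M) φ) :
    (weightSupport M φ).Nonempty := by
  by_contra hempty
  have hbot (m : MaximalSpectrum R) : weightSpace (M := M) φ m.asIdeal = ⊥ := by
    by_contra hm
    exact hempty ⟨m, hm⟩
  exact bot_ne_top ((iSup_eq_bot.2 hbot).symm.trans hw.iSup_eq_top)

theorem IsWeightModule.mem_weightSum_of_smul_eq_zero (hw : IsWeightModule (M := M) φ) {J : Set R}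
    {u : M} (hu : ∀ r ∈ J, φ r • u = 0) : u ∈ weightSum M φ {n | J ⊆ n.asIdeal} := by
  obtain ⟨v, hv, rfl⟩ := exists_finsupp_of_mem_iSup
    (p := fun m : MaximalSpectrum R => weightSpace φ m.asIdeal)
    (hw.iSup_eq_top ▸ AddSubgroup.mem_top u)
  refine sum_mem fun m hm => ?_
  have hkill (r : R) (hr : r ∈ J) : φ r • v m = 0 :=
    eq_zero_of_sum_eq_zero_of_iSupIndep hw.iSupIndep
      (fun n _ => smul_mem_weightSpace r (hv n))
      (by simpa only [Finsupp.sum, Finset.smul_sum] using hu r hr) m hm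
  have hJm : J ⊆ m.asIdeal := fun r hr =>
    mem_of_smul_eq_zero_of_mem_weightSpace m.isMaximal (hv m) (Finsupp.mem_support_iff.1 hm)
      (hkill r hr)
  exact weightSpace_le_weightSum hJm (hv m)

end Weight

section WeakGWA

open scoped Pointwise

variable [CommRing R] [Ring A] [AddCommGroup M] [Module A M] {φ : R →+* A} {σ : R →+* R} {t : R}
  {X Y : A} {hσ : ∀ m : Ideal R, m.IsMaximal → (m.comap σ).IsMaximal} {m : MaximalSpectrum R}

theorem Y_smul_mem_weightSpace (hrY : ∀ r : R, φ r * Y = Y * φ (σ r)) {m : Ideal R} {v : M}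
    (hv : v ∈ weightSpace φ m) : Y • v ∈ weightSpace φ (m.comap σ) := by
  intro r hr
  rw [← mul_smul, hrY, mul_smul, hv (σ r) hr, smul_zero]

theorem X_smul_mem_weightSum (hXr : ∀ r : R, X * φ r = φ (σ r) * X)
    (hw : IsWeightModule (M := M) φ) {v : M} (hv : v ∈ weightSpace φ m.asIdeal) :
    X • v ∈ weightSum M φ {n | maximalComap hσ n = m} := by
  have hkill : ∀ r ∈ σ '' m.asIdeal, φ r • X • v = 0 := by
    rintro _ ⟨r, hr, rfl⟩
    rw [← mul_smul, ← hXr, mul_smul, hv r hr, smul_zero]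
  refine weightSum_le (fun n hn => weightSpace_le_weightSum ?_)
    (hw.mem_weightSum_of_smul_eq_zero hkill)
  have hle : m.asIdeal ≤ n.asIdeal.comap σ := fun r hr => hn ⟨r, hr, rfl⟩
  exact MaximalSpectrum.ext
    (m.isMaximal.eq_of_le (maximalComap hσ n).isMaximal.ne_top hle).symm

theorem map_mul_Y_pow (hrY : ∀ r : R, φ r * Y = Y * φ (σ r)) (k : ℕ) (r : R) :
    φ r * Y ^ k = Y ^ k * φ (σ^[k] r) := by
  induction k generalizing r with
  | zero => simp
  | succ k ih =>
    rw [pow_succ', ← mul_assoc, hrY, mul_assoc, ih, ← mul_assoc, Function.iterate_succ_apply]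

theorem Y_pow_smul_mem_weightSpace (hrY : ∀ r : R, φ r * Y = Y * φ (σ r)) {v : M}
    (hv : v ∈ weightSpace φ m.asIdeal) (k : ℕ) :
    Y ^ k • v ∈ weightSpace φ ((maximalComap hσ)^[k] m).asIdeal := by
  induction k with
  | zero => simpa using hv
  | succ k ih =>
    rw [Function.iterate_succ_apply', pow_succ', mul_smul]
    exact Y_smul_mem_weightSpace hrY ih

variable (M φ Y hσ m) in
/-- The sum of the weight spaces at the ideals having `m` as an iterate and of all `Y ^ k M_m`.
It is the submodule used to compare the weights of a simple module. Below `m` only the images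
`Y ^ k M_m` are taken, since `X` may lead from a full weight space below `m` to a weight not
comparable with `m`. -/
def weightCone : AddSubgroup M :=
  weightSum M φ {n | ∃ k : ℕ, (maximalComap hσ)^[k] n = m} ⊔
    ⨆ k : ℕ, Y ^ k • weightSpace φ m.asIdeal

theorem weightSpace_le_weightCone {n : MaximalSpectrum R} {k : ℕ}
    (hn : (maximalComap hσ)^[k] n = m) :
    weightSpace φ n.asIdeal ≤ weightCone M φ Y hσ m :=
  (weightSpace_le_weightSum (Exists.intro k hn)).trans le_sup_left

theorem Y_pow_smul_mem_weightCone {v : M} (hv : v ∈ weightSpace φ m.asIdeal) (k : ℕ) :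
    Y ^ k • v ∈ weightCone M φ Y hσ m :=
  AddSubgroup.mem_sup_right
    (AddSubgroup.mem_iSup_of_mem k (AddSubgroup.smul_mem_pointwise_smul v (Y ^ k) _ hv))

theorem weightCone_le {N : AddSubgroup M}
    (habove : ∀ n (k : ℕ), (maximalComap hσ)^[k] n = m → weightSpace φ n.asIdeal ≤ N)
    (hbelow : ∀ (k : ℕ), ∀ v ∈ weightSpace φ m.asIdeal, Y ^ (k + 1) • v ∈ N) :
    weightCone M φ Y hσ m ≤ N := by
  refine sup_le (weightSum_le fun n ⟨k, hk⟩ => habove n k hk) (iSup_le ?_)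
  rintro k _ ⟨v, hv, rfl⟩
  cases k with
  | zero => simpa using habove m 0 rfl hv
  | succ k => exact hbelow k v hv

theorem smul_mem_weightCone_of {a : A}
    (habove : ∀ n (k : ℕ), (maximalComap hσ)^[k] n = m → ∀ v ∈ weightSpace φ n.asIdeal,
      a • v ∈ weightCone M φ Y hσ m)
    (hbelow : ∀ (k : ℕ), ∀ v ∈ weightSpace φ m.asIdeal,
      a • Y ^ (k + 1) • v ∈ weightCone M φ Y hσ m) :
    ∀ v ∈ weightCone M φ Y hσ m, a • v ∈ weightCone M φ Y hσ m :=
  weightCone_le (N := (weightCone M φ Y hσ m).comap (DistribSMul.toAddMonoidHom M a))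
    habove hbelow

theorem map_smul_mem_weightCone (hrY : ∀ r : R, φ r * Y = Y * φ (σ r)) (r : R) :
    ∀ v ∈ weightCone M φ Y hσ m, φ r • v ∈ weightCone M φ Y hσ m := by
  refine smul_mem_weightCone_of (fun n k hk v hv => ?_) (fun k v hv => ?_)
  · exact weightSpace_le_weightCone hk (smul_mem_weightSpace r hv)
  · rw [← mul_smul, map_mul_Y_pow hrY, mul_smul]
    exact Y_pow_smul_mem_weightCone (smul_mem_weightSpace _ hv) (k + 1)

theorem X_smul_mem_weightCone (hXY : X * Y = φ (σ t)) (hXr : ∀ r : R, X * φ r = φ (σ r) * X)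
    (hrY : ∀ r : R, φ r * Y = Y * φ (σ r)) (hw : IsWeightModule (M := M) φ) :
    ∀ v ∈ weightCone M φ Y hσ m, X • v ∈ weightCone M φ Y hσ m := by
  refine smul_mem_weightCone_of (fun n k hk v hv => ?_) (fun k v hv => ?_)
  · refine weightSum_le (fun n' hn' => ?_) (X_smul_mem_weightSum (hσ := hσ) hXr hw hv)
    have hn'n : maximalComap hσ n' = n := hn'
    exact weightSpace_le_weightCone (k := k + 1)
      (by rw [Function.iterate_succ_apply, hn'n, hk])
  · rw [pow_succ', mul_smul, ← mul_smul, hXY]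
    exact map_smul_mem_weightCone hrY _ _ (Y_pow_smul_mem_weightCone hv k)

theorem Y_smul_mem_weightCone (hrY : ∀ r : R, φ r * Y = Y * φ (σ r)) :
    ∀ v ∈ weightCone M φ Y hσ m, Y • v ∈ weightCone M φ Y hσ m := by
  refine smul_mem_weightCone_of (fun n k hk v hv => ?_) (fun k v hv => ?_)
  · cases k with
    | zero =>
      obtain rfl : n = m := hk
      simpa using Y_pow_smul_mem_weightCone hv 1
    | succ k =>
      exact weightSpace_le_weightCone (n := maximalComap hσ n) hk (Y_smul_mem_weightSpace hrY hv)
  · rw [← mul_smul, ← pow_succ']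
    exact Y_pow_smul_mem_weightCone hv (k + 2)

theorem weightCone_eq_top [IsSimpleModule A M] (hXY : X * Y = φ (σ t))
    (hXr : ∀ r : R, X * φ r = φ (σ r) * X) (hrY : ∀ r : R, φ r * Y = Y * φ (σ r))
    (hgen : Subring.closure (Set.range φ ∪ {X, Y}) = ⊤) (hw : IsWeightModule (M := M) φ)
    (hm : m ∈ weightSupport M φ) : weightCone M φ Y hσ m = ⊤ := by
  have hstable : ∀ a ∈ Set.range φ ∪ {X, Y}, ∀ v ∈ weightCone M φ Y hσ m,
      a • v ∈ weightCone M φ Y hσ m := by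
    rintro _ (⟨r, rfl⟩ | rfl | rfl)
    · exact map_smul_mem_weightCone hrY r
    · exact X_smul_mem_weightCone hXY hXr hrY hw
    · exact Y_smul_mem_weightCone hrY
  let N : Submodule A M :=
    { weightCone M φ Y hσ m with
      smul_mem' := fun a v hv => smul_mem_of_closure_eq_top hgen hstable a v hv }
  have hmN : weightSpace φ m.asIdeal ≤ N.toAddSubgroup := weightSpace_le_weightCone (k := 0) rfl
  have hN : N ≠ ⊥ := fun hbot => hm (le_bot_iff.1 (by simpa [hbot] using hmN))
  exact congrArg Submodule.toAddSubgroup ((eq_bot_or_eq_top N).resolve_left hN)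

theorem iterateComparable_of_mem_weightSupport [IsSimpleModule A M] (hXY : X * Y = φ (σ t))
    (hXr : ∀ r : R, X * φ r = φ (σ r) * X) (hrY : ∀ r : R, φ r * Y = Y * φ (σ r))
    (hgen : Subring.closure (Set.range φ ∪ {X, Y}) = ⊤) (hw : IsWeightModule (M := M) φ)
    (hm : m ∈ weightSupport M φ) {n : MaximalSpectrum R} (hn : n ∈ weightSupport M φ) :
    IterateComparable (maximalComap hσ) m n := by
  refine hw.weightSupport_subset_of_weightSum_eq_top
    (S := {n | IterateComparable (maximalComap hσ) m n}) (top_le_iff.1 ?_) hn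
  rw [← weightCone_eq_top (hσ := hσ) hXY hXr hrY hgen hw hm]
  refine weightCone_le (fun n k hk => weightSpace_le_weightSum (.inr ⟨k, hk⟩)) fun k v hv => ?_
  exact weightSpace_le_weightSum (.inl ⟨k + 1, rfl⟩) (Y_pow_smul_mem_weightSpace hrY hv (k + 1))

theorem mem_of_forall_maximalComap_ne (hYX : Y * X = φ t) (hXr : ∀ r : R, X * φ r = φ (σ r) * X)
    (hw : IsWeightModule (M := M) φ) (hm : m ∈ weightSupport M φ)
    (hpre : ∀ n ∈ weightSupport M φ, maximalComap hσ n ≠ m) : t ∈ m.asIdeal := by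
  obtain ⟨v, hv, hv0⟩ := (AddSubgroup.bot_or_exists_ne_zero _).resolve_left hm
  have hXv : X • v = 0 := by
    refine AddSubgroup.mem_bot.1 (weightSum_le (fun n hn => ?_)
      (X_smul_mem_weightSum (hσ := hσ) hXr hw hv))
    by_contra hne
    exact hpre n (fun h => hne h.le) hn
  exact mem_of_smul_eq_zero_of_mem_weightSpace m.isMaximal hv hv0
    (by rw [← hYX, mul_smul, hXv, smul_zero])

theorem exists_int_chain_or_exists_top_weight [IsSimpleModule A M] (hYX : Y * X = φ t)
    (hXY : X * Y = φ (σ t)) (hXr : ∀ r : R, X * φ r = φ (σ r) * X)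
    (hrY : ∀ r : R, φ r * Y = Y * φ (σ r))
    (hσ : ∀ m : Ideal R, m.IsMaximal → (m.comap σ).IsMaximal)
    (hgen : Subring.closure (Set.range φ ∪ {X, Y}) = ⊤) (hw : IsWeightModule (M := M) φ) :
    (∃ c : ℤ → MaximalSpectrum R, (∀ i, maximalComap hσ (c (i + 1)) = c i) ∧
        weightSupport M φ ⊆ Set.range c) ∨
      ∃ m : MaximalSpectrum R, t ∈ m.asIdeal ∧
        ∀ n ∈ weightSupport M φ, ∃ k : ℕ, (maximalComap hσ)^[k] m = n := by
  have := IsSimpleModule.nontrivial A M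
  refine (exists_int_orbit_or_exists_root hw.weightSupport_nonempty fun m hm n hn =>
    iterateComparable_of_mem_weightSupport hXY hXr hrY hgen hw hm hn).imp_right ?_
  rintro ⟨m, hm, hpre, hroot⟩
  exact ⟨m, mem_of_forall_maximalComap_ne hYX hXr hw hm hpre, hroot⟩

end WeakGWA

theorem stmt_12_general [CommRing R] [Ring A] [AddCommGroup M] [Module A M]
    (φ : R →+* A) (σ : R →+* R) (t : R) (X Y : A)
    (hYX : Y * X = φ t) (hXY : X * Y = φ (σ t))
    (hXr : ∀ r : R, X * φ r = φ (σ r) * X)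
    (hrY : ∀ r : R, φ r * Y = Y * φ (σ r))
    (hσ : ∀ m : Ideal R, m.IsMaximal → (m.comap σ).IsMaximal)
    (hgen : Subring.closure (Set.range φ ∪ {X, Y}) = ⊤)
    (hw : IsWeightModule (M := M) φ)
    (hsimple : IsSimpleModule A M) :
    ∃ (I : Set ℤ) (mm : ℤ → Ideal R),
      (I = Set.univ ∨ I = {i : ℤ | 0 ≤ i} ∨ I = {i : ℤ | i ≤ 0} ∨
        ∃ n : ℕ, I = {i : ℤ | 0 ≤ i ∧ i ≤ (n : ℤ)}) ∧
      (∀ i ∈ I, (mm i).IsMaximal) ∧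
      (∀ i : ℤ, i ∈ I → i + 1 ∈ I → ∀ r ∈ mm i, σ r ∈ mm (i + 1)) ∧
      (∀ i₀ ∈ I, (∀ i ∈ I, i₀ ≤ i) → σ t ∈ mm i₀) ∧
      (∀ i₁ ∈ I, (∀ i ∈ I, i ≤ i₁) → t ∈ mm i₁) ∧
      (∀ m : Ideal R, m.IsMaximal → weightSpace (M := M) φ m ≠ ⊥ →
        ∃ i ∈ I, m = mm i) := by
  rcases exists_int_chain_or_exists_top_weight hYX hXY hXr hrY hσ hgen hw with
    ⟨c, hc, hsupp⟩ | ⟨m, htm, hsupp⟩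
  · refine ⟨Set.univ, fun i => (c i).asIdeal, .inl rfl, fun i _ => (c i).isMaximal,
      fun i _ _ r hr => ?_, fun i _ hi => ?_, fun i _ hi => ?_, fun n hn hn0 => ?_⟩
    · exact (congrArg MaximalSpectrum.asIdeal (hc i)).ge hr
    · linarith [hi (i - 1) trivial]
    · linarith [hi (i + 1) trivial]
    · obtain ⟨i, hi⟩ := hsupp (show ⟨n, hn⟩ ∈ weightSupport M φ from hn0)
      exact ⟨i, trivial, congrArg MaximalSpectrum.asIdeal hi.symm⟩
  · refine ⟨{i : ℤ | i ≤ 0}, fun i => ((maximalComap hσ)^[(-i).toNat] m).asIdeal,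
      .inr (.inr (.inl rfl)), fun i _ => MaximalSpectrum.isMaximal _, ?_, ?_, ?_, ?_⟩
    · intro i _ (hi : i + 1 ≤ 0) r hr
      have hsucc : (-i).toNat = (-(i + 1)).toNat + 1 := by omega
      simp only [hsucc, Function.iterate_succ_apply'] at hr
      exact hr
    · intro i (hi : i ≤ 0) hleast
      linarith [hleast (i - 1) (show i - 1 ≤ 0 by omega)]
    · intro i (hi : i ≤ 0) hgreatest
      obtain rfl : i = 0 := le_antisymm hi (hgreatest 0 (le_refl (0 : ℤ)))
      exact htm
    · intro n hn hn0
      obtain ⟨k, hk⟩ := hsupp ⟨n, hn⟩ hn0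
      exact ⟨-k, by simp, by simp [hk]⟩

theorem stmt_12 [CommRing R] [Ring A] [AddCommGroup M] [Module A M]
    (φ : R →+* A) (σ : R →+* R) (t : R) (X Y : A)
    (hYX : Y * X = φ t) (hXY : X * Y = φ (σ t))
    (hXr : ∀ r : R, X * φ r = φ (σ r) * X)
    (hrY : ∀ r : R, φ r * Y = Y * φ (σ r))
    (hess : IsEssential σ)
    (hgen : Subring.closure (Set.range φ ∪ {X, Y}) = ⊤)
    (hw : IsWeightModule (M := M) φ)
    (hsimple : IsSimpleModule A M) :
    ∃ (I : Set ℤ) (mm : ℤ → Ideal R),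
      (I = Set.univ ∨ I = {i : ℤ | 0 ≤ i} ∨ I = {i : ℤ | i ≤ 0} ∨
        ∃ n : ℕ, I = {i : ℤ | 0 ≤ i ∧ i ≤ (n : ℤ)}) ∧
      (∀ i ∈ I, (mm i).IsMaximal) ∧
      (∀ i : ℤ, i ∈ I → i + 1 ∈ I → ∀ r ∈ mm i, σ r ∈ mm (i + 1)) ∧
      (∀ i₀ ∈ I, (∀ i ∈ I, i₀ ≤ i) → σ t ∈ mm i₀) ∧
      (∀ i₁ ∈ I, (∀ i ∈ I, i ≤ i₁) → t ∈ mm i₁) ∧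
      (∀ m : Ideal R, m.IsMaximal → weightSpace (M := M) φ m ≠ ⊥ →
        ∃ i ∈ I, m = mm i) :=
  stmt_12_general φ σ t X Y hYX hXY hXr hrY (fun _ => hess.isMaximal_comap) hgen hw hsimple
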